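/- (Weyl orbit of I_zS_z.) The intersection of the adjoint orbit {(k₁⊗k₂)⁻¹ (i I_zS_z) (k₁⊗k₂) : k₁, k₂ ∈ SU(2)} with the abelian subalgebra 𝔥 = span_ℝ{iI_xS_x, iI_yS_y, iI_zS_z} is exactly the six-element set {±iI_xS_x, ±iI_yS_y, ±iI_zS_z}. -/

import Mathlib

open Kronecker
open scoped Matrix

/-- One half times the Pauli matrix `σ_x`. -/
noncomputable def pax : Matrix (Fin 2) (Fin 2) ℂ := (1 / 2 : ℂ) • !![0, 1; 1, 0]

/-- One half times the Pauli matrix `σ_y`. -/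
noncomputable def pay : Matrix (Fin 2) (Fin 2) ℂ :=
  (1 / 2 : ℂ) • !![0, -Complex.I; Complex.I, 0]

/-- One half times the Pauli matrix `σ_z`. -/
noncomputable def paz : Matrix (Fin 2) (Fin 2) ℂ := (1 / 2 : ℂ) • !![1, 0; 0, -1]

/-- The three spin-1/2 operators, indexed by `Fin 3` (`0 ↦ x`, `1 ↦ y`, `2 ↦ z`). -/
noncomputable def pauli : Fin 3 → Matrix (Fin 2) (Fin 2) ℂ := ![pax, pay, paz]

/-- The first-spin operators `I_α = σ_α ⊗ 1`. -/
noncomputable def Iop (a : Fin 3) : Matrix (Fin 2 × Fin 2) (Fin 2 × Fin 2) ℂ :=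
  pauli a ⊗ₖ (1 : Matrix (Fin 2) (Fin 2) ℂ)

/-- The second-spin operators `S_α = 1 ⊗ σ_α`. -/
noncomputable def Sop (a : Fin 3) : Matrix (Fin 2 × Fin 2) (Fin 2 × Fin 2) ℂ :=
  (1 : Matrix (Fin 2) (Fin 2) ℂ) ⊗ₖ pauli a

noncomputable abbrev Ix' := Iop 0
noncomputable abbrev Iy' := Iop 1
noncomputable abbrev Iz' := Iop 2
noncomputable abbrev Sx' := Sop 0
noncomputable abbrev Sy' := Sop 1
noncomputable abbrev Sz' := Sop 2

/-- The subgroup `K = {k₁ ⊗ k₂ : k₁, k₂ ∈ SU(2)}` of `SU(4)`. -/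
def K2 : Set (Matrix (Fin 2 × Fin 2) (Fin 2 × Fin 2) ℂ) :=
  {g | ∃ k₁ ∈ Matrix.specialUnitaryGroup (Fin 2) ℂ,
       ∃ k₂ ∈ Matrix.specialUnitaryGroup (Fin 2) ℂ, g = k₁ ⊗ₖ k₂}

/-- The directions `i I_αS_α` (for `α = x,y,z`) spanning the abelian subalgebra
`𝔥 = span_ℝ{iI_xS_x, iI_yS_y, iI_zS_z}`. -/
noncomputable def hbasis (a : Fin 3) : Matrix (Fin 2 × Fin 2) (Fin 2 × Fin 2) ℂ :=
  Complex.I • (Iop a * Sop a)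

/-- The adjoint orbit `{(k₁⊗k₂)⁻¹ (i I_zS_z) (k₁⊗k₂) : k₁, k₂ ∈ SU(2)}`. -/
def adOrbitIzSz : Set (Matrix (Fin 2 × Fin 2) (Fin 2 × Fin 2) ℂ) :=
  {A | ∃ k₁ ∈ Matrix.specialUnitaryGroup (Fin 2) ℂ,
       ∃ k₂ ∈ Matrix.specialUnitaryGroup (Fin 2) ℂ,
       A = (k₁ ⊗ₖ k₂)⁻¹ * (Complex.I • (Iz' * Sz')) * (k₁ ⊗ₖ k₂)}


theorem pauli_zero : pauli 0 = pax := rfl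
theorem pauli_one : pauli 1 = pay := rfl
theorem pauli_two : pauli 2 = paz := rfl

theorem hb_eq (a : Fin 3) : hbasis a = Complex.I • (pauli a ⊗ₖ pauli a) := by
  unfold hbasis Iop Sop
  rw [← Matrix.mul_kronecker_mul, mul_one, one_mul]

theorem orbit_eq (k₁ k₂ : Matrix (Fin 2) (Fin 2) ℂ) :
    (k₁ ⊗ₖ k₂)⁻¹ * (Complex.I • (Iz' * Sz')) * (k₁ ⊗ₖ k₂) =
      Complex.I • ((k₁⁻¹ * paz * k₁) ⊗ₖ (k₂⁻¹ * paz * k₂)) := by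
  have h : Complex.I • (Iz' * Sz') = Complex.I • (paz ⊗ₖ paz) := hb_eq 2
  rw [h, Matrix.inv_kronecker, Matrix.mul_smul, Matrix.smul_mul,
    ← Matrix.mul_kronecker_mul, ← Matrix.mul_kronecker_mul]

theorem paz_sq : paz * paz = (1 / 4 : ℂ) • 1 := by
  refine Matrix.ext (Fin.forall_fin_two.2 ⟨Fin.forall_fin_two.2 ⟨?_, ?_⟩, Fin.forall_fin_two.2 ⟨?_, ?_⟩⟩) <;> simp [paz, Matrix.mul_apply] <;> norm_num

theorem conj_form (k : Matrix (Fin 2) (Fin 2) ℂ)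
    (hk : k ∈ Matrix.specialUnitaryGroup (Fin 2) ℂ) :
    ∃ p q r : ℂ, k⁻¹ * paz * k = !![p, q; r, -p] ∧ p * p + q * r = 1 / 4 := by
  have hdet : IsUnit k.det := by
    rw [(Matrix.mem_specialUnitaryGroup_iff.1 hk).2]; exact isUnit_one
  have htr : (k⁻¹ * paz * k).trace = 0 := by
    rw [Matrix.trace_mul_comm, ← mul_assoc, Matrix.mul_nonsing_inv _ hdet, one_mul]
    simp [paz, Matrix.trace]
  have hsq : (k⁻¹ * paz * k) * (k⁻¹ * paz * k) = (1 / 4 : ℂ) • 1 := by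
    calc _ = k⁻¹ * paz * (k * k⁻¹) * paz * k := by simp only [mul_assoc]
      _ = k⁻¹ * (paz * paz) * k := by
        rw [Matrix.mul_nonsing_inv _ hdet, mul_one]; simp only [mul_assoc]
      _ = _ := by
        rw [paz_sq, Matrix.mul_smul, Matrix.smul_mul, mul_one, Matrix.nonsing_inv_mul _ hdet]
  generalize k⁻¹ * paz * k = M at *
  have h11 : M 1 1 = - M 0 0 := by
    rw [Matrix.trace_fin_two] at htr; linear_combination htr
  refine ⟨M 0 0, M 0 1, M 1 0, ?_, ?_⟩
  · refine Matrix.ext (Fin.forall_fin_two.2 ⟨Fin.forall_fin_two.2 ⟨?_, ?_⟩, Fin.forall_fin_two.2 ⟨?_, ?_⟩⟩) <;> simp [h11]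
  · have := congrFun (congrFun hsq 0) 0
    simpa [Matrix.mul_apply, Fin.sum_univ_two] using this

theorem su_of (a b : ℂ) (h : a * star a + b * star b = 1) :
    !![a, b; -star b, star a] ∈ Matrix.specialUnitaryGroup (Fin 2) ℂ := by
  rw [Matrix.mem_specialUnitaryGroup_iff, Matrix.mem_unitaryGroup_iff]
  constructor
  · refine Matrix.ext (Fin.forall_fin_two.2 ⟨Fin.forall_fin_two.2 ⟨?_, ?_⟩, Fin.forall_fin_two.2 ⟨?_, ?_⟩⟩) <;>
      simp [Matrix.mul_apply, Fin.sum_univ_two, Matrix.star_apply] <;>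
      simp at h <;> first | linear_combination h | ring
  · rw [Matrix.det_fin_two_of]; linear_combination h

theorem conj_of {k M : Matrix (Fin 2) (Fin 2) ℂ}
    (hk : k ∈ Matrix.specialUnitaryGroup (Fin 2) ℂ) (h : paz * k = k * M) :
    k⁻¹ * paz * k = M := by
  have hdet : IsUnit k.det := by
    rw [(Matrix.mem_specialUnitaryGroup_iff.1 hk).2]; exact isUnit_one
  rw [mul_assoc, h, ← mul_assoc, Matrix.nonsing_inv_mul _ hdet, one_mul]

theorem exists_su (a : Fin 3) : (∃ k ∈ Matrix.specialUnitaryGroup (Fin 2) ℂ,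
    k⁻¹ * paz * k = pauli a) ∧ (∃ k ∈ Matrix.specialUnitaryGroup (Fin 2) ℂ,
    k⁻¹ * paz * k = - pauli a) := by
  obtain ⟨s, hs, hs'⟩ : ∃ s : ℂ, s * s = 1 / 2 ∧ star s = s := by
    refine ⟨((Real.sqrt (1 / 2) : ℝ) : ℂ), ?_, Complex.conj_ofReal _⟩
    rw [← Complex.ofReal_mul, Real.mul_self_sqrt (by norm_num)]; norm_num
  have hs2 : (starRingEnd ℂ) s = s := hs'
  have key : ∀ (x y : ℂ) (M : Matrix (Fin 2) (Fin 2) ℂ), x * star x + y * star y = 1 →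
      paz * !![x, y; -star y, star x] = !![x, y; -star y, star x] * M →
      ∃ k ∈ Matrix.specialUnitaryGroup (Fin 2) ℂ, k⁻¹ * paz * k = M :=
    fun x y M h h' => ⟨_, su_of x y h, conj_of (su_of x y h) h'⟩
  have hI := Complex.I_mul_I
  fin_cases a
  · change (∃ k ∈ _, k⁻¹ * paz * k = pax) ∧ (∃ k ∈ _, k⁻¹ * paz * k = -pax)
    refine ⟨key s s _ ?_ ?_, key s (-s) _ ?_ ?_⟩
    · rw [hs']; linear_combination 2 * hs
    · refine Matrix.ext (Fin.forall_fin_two.2 ⟨Fin.forall_fin_two.2 ⟨?_, ?_⟩, Fin.forall_fin_two.2 ⟨?_, ?_⟩⟩) <;>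
        simp [paz, pax, Matrix.mul_apply, Fin.sum_univ_two, hs2] <;> ring
    · rw [star_neg, hs']; linear_combination 2 * hs
    · refine Matrix.ext (Fin.forall_fin_two.2 ⟨Fin.forall_fin_two.2 ⟨?_, ?_⟩, Fin.forall_fin_two.2 ⟨?_, ?_⟩⟩) <;>
        simp [paz, pax, Matrix.mul_apply, Fin.sum_univ_two, hs2] <;> ring
  · change (∃ k ∈ _, k⁻¹ * paz * k = pay) ∧ (∃ k ∈ _, k⁻¹ * paz * k = -pay)
    refine ⟨key s (-Complex.I * s) _ ?_ ?_, key s (Complex.I * s) _ ?_ ?_⟩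
    · simp [hs2]; linear_combination 2 * hs - s * s * hI
    · refine Matrix.ext (Fin.forall_fin_two.2 ⟨Fin.forall_fin_two.2 ⟨?_, ?_⟩, Fin.forall_fin_two.2 ⟨?_, ?_⟩⟩) <;>
        simp [paz, pay, Matrix.mul_apply, Fin.sum_univ_two, hs2] <;> ring_nf <;> simp <;> ring
    · simp [hs2]; linear_combination 2 * hs - s * s * hI
    · refine Matrix.ext (Fin.forall_fin_two.2 ⟨Fin.forall_fin_two.2 ⟨?_, ?_⟩, Fin.forall_fin_two.2 ⟨?_, ?_⟩⟩) <;>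
        simp [paz, pay, Matrix.mul_apply, Fin.sum_univ_two, hs2] <;> ring_nf <;> simp <;> ring
  · change (∃ k ∈ _, k⁻¹ * paz * k = paz) ∧ (∃ k ∈ _, k⁻¹ * paz * k = -paz)
    refine ⟨key 1 0 _ ?_ ?_, key 0 1 _ ?_ ?_⟩
    · simp
    · refine Matrix.ext (Fin.forall_fin_two.2 ⟨Fin.forall_fin_two.2 ⟨?_, ?_⟩, Fin.forall_fin_two.2 ⟨?_, ?_⟩⟩) <;>
        simp [paz, Matrix.mul_apply, Fin.sum_univ_two]
    · simp
    · refine Matrix.ext (Fin.forall_fin_two.2 ⟨Fin.forall_fin_two.2 ⟨?_, ?_⟩, Fin.forall_fin_two.2 ⟨?_, ?_⟩⟩) <;>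
        simp [paz, Matrix.mul_apply, Fin.sum_univ_two]

theorem mem_orbit (a : Fin 3) : hbasis a ∈ adOrbitIzSz ∧ -hbasis a ∈ adOrbitIzSz := by
  obtain ⟨⟨k, hk, h⟩, ⟨l, hl, h'⟩⟩ := exists_su a
  refine ⟨⟨k, hk, k, hk, ?_⟩, ⟨l, hl, k, hk, ?_⟩⟩
  · rw [orbit_eq, h, hb_eq]
  · rw [orbit_eq, h, h', hb_eq]
    ext i j
    simp [Matrix.kroneckerMap_apply]

theorem coeffs {p q r p' q' r' : ℂ} {a b c : ℝ} (h1 : p * p + q * r = 1 / 4)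
    (h2 : p' * p' + q' * r' = 1 / 4)
    (e : Complex.I • (!![p, q; r, -p] ⊗ₖ !![p', q'; r', -p']) =
      a • hbasis 0 + b • hbasis 1 + c • hbasis 2) :
    (a = 0 ∧ b = 0 ∧ (c = 1 ∨ c = -1)) ∨ (c = 0 ∧ b = 0 ∧ (a = 1 ∨ a = -1)) ∨
      (a = 0 ∧ c = 0 ∧ (b = 1 ∨ b = -1)) := by
  have E : ∀ i j k l, !![p, q; r, -p] i k * !![p', q'; r', -p'] j l =
      a * (pax i k * pax j l) + b * (pay i k * pay j l) + c * (paz i k * paz j l) := by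
    intro i j k l
    have := congrFun (congrFun e (i, j)) (k, l)
    simp only [hb_eq, Matrix.add_apply, Matrix.smul_apply, Matrix.kroneckerMap_apply,
      smul_eq_mul, Complex.real_smul] at this
    refine mul_left_cancel₀ Complex.I_ne_zero ?_
    rw [this, pauli_zero, pauli_one, pauli_two]; ring
  have hI := Complex.I_mul_I
  have z0 : p * p' = c / 4 := by
    have := E 0 0 0 0; simp [pax, pay, paz] at this; linear_combination this
  have z1 : p * q' = 0 := by
    have := E 0 0 0 1; simp [pax, pay, paz] at this; simp [this]
  have z2 : p * r' = 0 := by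
    have := E 0 1 0 0; simp [pax, pay, paz] at this; simp [this]
  have z3 : q * p' = 0 := by
    have := E 0 0 1 0; simp [pax, pay, paz] at this; simp [this]
  have z4 : r * p' = 0 := by
    have := E 1 0 0 0; simp [pax, pay, paz] at this; simp [this]
  have w1 : q * q' = (a - b) / 4 := by
    have := E 0 0 1 1; simp [pax, pay, paz] at this; linear_combination this + b / 4 * hI
  have w2 : r * r' = (a - b) / 4 := by
    have := E 1 1 0 0; simp [pax, pay, paz] at this; linear_combination this + b / 4 * hI
  have w3 : q * r' = (a + b) / 4 := by
    have := E 0 1 1 0; simp [pax, pay, paz] at this; linear_combination this - b / 4 * hI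
  have w4 : r * q' = (a + b) / 4 := by
    have := E 1 0 0 1; simp [pax, pay, paz] at this; linear_combination this - b / 4 * hI
  by_cases hp : p = 0
  · subst hp
    have hq : q ≠ 0 := by rintro rfl; norm_num at h1
    have hp' : p' = 0 := by simpa [hq] using z3
    subst hp'
    have hc : c = 0 := by
      have : (c : ℂ) = 0 := by linear_combination -4 * z0
      exact_mod_cast this
    have m1 : (a - b) * (a - b) = 1 := by
      have : ((a : ℂ) - b) * (a - b) = 1 := by
        linear_combination -16 * r * r' * w1 - 4 * (a - b) * w2 + 16 * q' * r' * h1 + 4 * h2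
      exact_mod_cast this
    have m2 : (a + b) * (a + b) = 1 := by
      have : ((a : ℂ) + b) * (a + b) = 1 := by
        linear_combination -16 * r * q' * w3 - 4 * (a + b) * w4 + 16 * q' * r' * h1 + 4 * h2
      exact_mod_cast this
    have ab : a * b = 0 := by linarith
    rcases mul_eq_zero.1 ab with rfl | rfl
    · right; right
      exact ⟨rfl, hc, mul_self_eq_one_iff.1 (by linarith)⟩
    · right; left
      exact ⟨hc, rfl, mul_self_eq_one_iff.1 (by linarith)⟩
  · have hq' : q' = 0 := by simpa [hp] using z1
    have hr' : r' = 0 := by simpa [hp] using z2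
    subst hq' hr'
    have hp' : p' ≠ 0 := by rintro rfl; norm_num at h2
    have hq : q = 0 := by simpa [hp'] using z3
    subst hq
    have s1 : a - b = 0 := by
      have : (a : ℂ) - b = 0 := by linear_combination -4 * w1
      exact_mod_cast this
    have s2 : a + b = 0 := by
      have : (a : ℂ) + b = 0 := by linear_combination -4 * w3
      exact_mod_cast this
    have m : c * c = 1 := by
      have : (c : ℂ) * c = 1 := by
        linear_combination -16 * p * p' * z0 - 4 * c * z0 + 16 * p' * p' * h1 + 4 * h2
      exact_mod_cast this
    left
    exact ⟨by linarith, by linarith, mul_self_eq_one_iff.1 m⟩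

/- STATEMENT 15 (Weyl orbit of `I_zS_z`): the intersection of the adjoint orbit of
`iI_zS_z` with `𝔥 = span_ℝ{iI_xS_x, iI_yS_y, iI_zS_z}` is exactly
`{±iI_xS_x, ±iI_yS_y, ±iI_zS_z}`. -/
theorem stmt_15 :
    adOrbitIzSz ∩
      (Submodule.span ℝ ({hbasis 0, hbasis 1, hbasis 2} :
        Set (Matrix (Fin 2 × Fin 2) (Fin 2 × Fin 2) ℂ)) :
          Set (Matrix (Fin 2 × Fin 2) (Fin 2 × Fin 2) ℂ)) =
      {hbasis 0, -hbasis 0, hbasis 1, -hbasis 1, hbasis 2, -hbasis 2} := by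
  ext A
  constructor
  · rintro ⟨⟨k₁, hk₁, k₂, hk₂, rfl⟩, hA⟩
    obtain ⟨a, b, c, e⟩ := Submodule.mem_span_triple.1 hA
    rw [← e]
    rw [orbit_eq] at e
    obtain ⟨p, q, r, hM, h1⟩ := conj_form k₁ hk₁
    obtain ⟨p', q', r', hM', h2⟩ := conj_form k₂ hk₂
    rw [hM, hM'] at e
    rcases coeffs h1 h2 e.symm with ⟨rfl, rfl, rfl | rfl⟩ | ⟨rfl, rfl, rfl | rfl⟩ |
      ⟨rfl, rfl, rfl | rfl⟩ <;> simp
  · have hm : ∀ a : Fin 3, hbasis a ∈ Submodule.span ℝ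
        ({hbasis 0, hbasis 1, hbasis 2} : Set (Matrix (Fin 2 × Fin 2) (Fin 2 × Fin 2) ℂ)) := by
      intro a
      apply Submodule.subset_span
      fin_cases a <;> simp
    rintro (rfl | rfl | rfl | rfl | rfl | rfl)
    · exact ⟨(mem_orbit 0).1, hm 0⟩
    · exact ⟨(mem_orbit 0).2, neg_mem (hm 0)⟩
    · exact ⟨(mem_orbit 1).1, hm 1⟩
    · exact ⟨(mem_orbit 1).2, neg_mem (hm 1)⟩
    · exact ⟨(mem_orbit 2).1, hm 2⟩
    · exact ⟨(mem_orbit 2).2, neg_mem (hm 2)⟩
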